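/- Let K be a field, let n ≤ m, and let B₁,…,B_k ∈ K^{m×n} be a linearly independent family of matrices generating a column-nondegenerate matrix rank-metric code C = span_K{B₁,…,B_k}, with associated column-system S. For every t ∈ {1,…,k}: d_t^r(C) = n − ⌊(k−t)/m⌋ if and only if S is (k−t)-column-scattered, i.e., every subspace W ⊆ K^k with dim_K W = k − t satisfies m·dim_K S_c(W) ≤ k − t. -/

import Mathlib

open Matrix

section Defs

variable {K : Type*} [Field K]

/-- The row space of a matrix: the span of its rows in `K^b`. -/
noncomputable def rowSpace {a b : ℕ} (M : Matrix (Fin a) (Fin b) K) :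
    Submodule K (Fin b → K) :=
  Submodule.span K (Set.range fun i => M i)

/-- The column space of a matrix: the span of its columns in `K^a`. -/
noncomputable def colSpace {a b : ℕ} (M : Matrix (Fin a) (Fin b) K) :
    Submodule K (Fin a → K) :=
  Submodule.span K (Set.range fun j i => M i j)

/-- `Sc S U = {X ∈ S : colsp(X) ⊆ U}`, a subspace of the matrix space. -/
noncomputable def Sc {a b : ℕ} (S : Submodule K (Matrix (Fin a) (Fin b) K))
    (U : Submodule K (Fin a → K)) : Submodule K (Matrix (Fin a) (Fin b) K) where
  carrier := {X | X ∈ S ∧ colSpace X ≤ U}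
  add_mem' := by
    rintro X Y ⟨hXS, hXU⟩ ⟨hYS, hYU⟩
    refine ⟨S.add_mem hXS hYS, ?_⟩
    rw [colSpace, Submodule.span_le]
    rintro v ⟨j, rfl⟩
    have hx : (fun i => X i j) ∈ U := hXU (Submodule.subset_span ⟨j, rfl⟩)
    have hy : (fun i => Y i j) ∈ U := hYU (Submodule.subset_span ⟨j, rfl⟩)
    exact U.add_mem hx hy
  zero_mem' := by
    refine ⟨S.zero_mem, ?_⟩
    rw [colSpace, Submodule.span_le]
    rintro v ⟨j, rfl⟩
    exact U.zero_mem
  smul_mem' := by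
    rintro c X ⟨hXS, hXU⟩
    refine ⟨S.smul_mem c hXS, ?_⟩
    rw [colSpace, Submodule.span_le]
    rintro v ⟨j, rfl⟩
    exact U.smul_mem c (hXU (Submodule.subset_span ⟨j, rfl⟩))

/-- `Sr S U = {X ∈ S : rowsp(X) ⊆ U}`, a subspace of the matrix space. -/
noncomputable def Sr {a b : ℕ} (S : Submodule K (Matrix (Fin a) (Fin b) K))
    (U : Submodule K (Fin b → K)) : Submodule K (Matrix (Fin a) (Fin b) K) where
  carrier := {X | X ∈ S ∧ rowSpace X ≤ U}
  add_mem' := by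
    rintro X Y ⟨hXS, hXU⟩ ⟨hYS, hYU⟩
    refine ⟨S.add_mem hXS hYS, ?_⟩
    rw [rowSpace, Submodule.span_le]
    rintro v ⟨i, rfl⟩
    have hx : X i ∈ U := hXU (Submodule.subset_span ⟨i, rfl⟩)
    have hy : Y i ∈ U := hYU (Submodule.subset_span ⟨i, rfl⟩)
    exact U.add_mem hx hy
  zero_mem' := by
    refine ⟨S.zero_mem, ?_⟩
    rw [rowSpace, Submodule.span_le]
    rintro v ⟨i, rfl⟩
    exact U.zero_mem
  smul_mem' := by
    rintro c X ⟨hXS, hXU⟩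
    refine ⟨S.smul_mem c hXS, ?_⟩
    rw [rowSpace, Submodule.span_le]
    rintro v ⟨i, rfl⟩
    exact U.smul_mem c (hXU (Submodule.subset_span ⟨i, rfl⟩))

/-- Row support of a set of matrices: the sum of the row spaces of its elements. -/
noncomputable def rowSupport {a b : ℕ} (D : Submodule K (Matrix (Fin a) (Fin b) K)) :
    Submodule K (Fin b → K) :=
  ⨆ M ∈ D, rowSpace M

/-- Column support of a set of matrices: the sum of the column spaces of its elements. -/
noncomputable def colSupport {a b : ℕ} (D : Submodule K (Matrix (Fin a) (Fin b) K)) :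
    Submodule K (Fin a → K) :=
  ⨆ M ∈ D, colSpace M

/-- The hyperplane `u^⊥ = {v : ∑ i, u i * v i = 0}`. -/
noncomputable def perp {a : ℕ} (u : Fin a → K) : Submodule K (Fin a → K) where
  carrier := {v | ∑ i, u i * v i = 0}
  add_mem' := by
    intro v w hv hw
    simp only [Set.mem_setOf_eq, Pi.add_apply, mul_add, Finset.sum_add_distrib] at *
    simp [hv, hw]
  zero_mem' := by simp
  smul_mem' := by
    intro c v hv
    simp only [Set.mem_setOf_eq, Pi.smul_apply, smul_eq_mul] at *
    have : ∑ i, u i * (c * v i) = c * ∑ i, u i * v i := by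
      rw [Finset.mul_sum]; congr 1; ext i; ring
    simp [this, hv]

/-- The orthogonal complement `U^⊥ = {v : ∀ u ∈ U, ∑ i, u i * v i = 0}`. -/
noncomputable def perpSub {a : ℕ} (U : Submodule K (Fin a → K)) : Submodule K (Fin a → K) :=
  ⨅ u ∈ U, perp u

/-- The slices of the column-system: `(X l) i j = (B i) j l`. -/
def colSlices {m n k : ℕ} (B : Fin k → Matrix (Fin m) (Fin n) K) :
    Fin n → Matrix (Fin k) (Fin m) K :=
  fun l => Matrix.of fun i j => B i j l

/-- The slices of the row-system: `(Y j) l i = (B i) j l`. -/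
def rowSlices {m n k : ℕ} (B : Fin k → Matrix (Fin m) (Fin n) K) :
    Fin m → Matrix (Fin n) (Fin k) K :=
  fun j => Matrix.of fun l i => B i j l

/-- The linear map `u ↦ ∑ i, u i • B i` (i.e. `u ↦ m₁(T,u)`). -/
noncomputable def combMap {m n k : ℕ} (B : Fin k → Matrix (Fin m) (Fin n) K) :
    (Fin k → K) →ₗ[K] Matrix (Fin m) (Fin n) K where
  toFun u := ∑ i, u i • B i
  map_add' := by intro u v; simp [add_smul, Finset.sum_add_distrib]
  map_smul' := by intro c u; simp [smul_smul, Finset.smul_sum]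

/-- The `t`-th row-generalized rank weight. -/
noncomputable def dRow {a b : ℕ} (C : Submodule K (Matrix (Fin a) (Fin b) K)) (t : ℕ) : ℕ :=
  sInf {r | ∃ D : Submodule K (Matrix (Fin a) (Fin b) K),
    D ≤ C ∧ Module.finrank K D = t ∧ Module.finrank K (rowSupport D) = r}

/-- The `t`-th column-generalized rank weight. -/
noncomputable def dCol {a b : ℕ} (C : Submodule K (Matrix (Fin a) (Fin b) K)) (t : ℕ) : ℕ :=
  sInf {r | ∃ D : Submodule K (Matrix (Fin a) (Fin b) K),
    D ≤ C ∧ Module.finrank K D = t ∧ Module.finrank K (colSupport D) = r}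

end Defs

/-!
A vector `v` is orthogonal to the row support of the subcode with coefficient space `U` exactly
when the combination of the slices `X₁, …, Xₙ` with coefficients `v` has its column space inside
`U^⊥`: both conditions say `∑ i j l, uᵢ vₗ (Bᵢ)ⱼₗ eⱼ = 0` for all `u ∈ U`. Nondegeneracy makes the
slices independent, so `dim S_c(W)` is `n` minus the dimension of the row support of the subcode
with coefficient space `W^⊥`. Minimizing over `W` of dimension `k - t`, the inequality
`n - s ≤ d_t^r(C)` says that every `dim S_c(W)` is at most `s`. For `s = ⌊(k - t) / m⌋` the reverse
inequality always holds: the matrices of `C` with rows in a subspace of codimension `s` form a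
subcode of codimension at most `m * s ≤ k - t`.
-/

open Module

section LinearAlgebra

theorem finrank_map_of_injective {R M N : Type*} [Semiring R] [AddCommMonoid M] [Module R M]
    [AddCommMonoid N] [Module R N] {f : M →ₗ[R] N} (hf : Function.Injective f)
    (p : Submodule R M) : finrank R (p.map f) = finrank R p :=
  (Submodule.equivMapOfInjective f hf p).finrank_eq.symm

theorem finrank_span_range_fin {K V : Type*} [DivisionRing K] [AddCommGroup V] [Module K V]
    {k : ℕ} {b : Fin k → V} (hb : LinearIndependent K b) :
    finrank K (Submodule.span K (Set.range b)) = k :=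
  (finrank_span_eq_card hb).trans (Fintype.card_fin k)

theorem exists_submodule_le_finrank_eq {K V : Type*} [DivisionRing K] [AddCommGroup V]
    [Module K V] (U : Submodule K V) {t : ℕ} (ht : t ≤ finrank K U) :
    ∃ U' ≤ U, finrank K U' = t := by
  obtain ⟨b, hb⟩ := exists_linearIndependent_of_le_finrank ht
  refine ⟨(Submodule.span K (Set.range b)).map U.subtype, Submodule.map_subtype_le U _, ?_⟩
  rw [finrank_map_of_injective U.injective_subtype, finrank_span_range_fin hb]

end LinearAlgebra

section Perp

variable {K : Type*} [Field K] {a b : ℕ}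

theorem mem_perpSub {U : Submodule K (Fin a → K)} {v : Fin a → K} :
    v ∈ perpSub U ↔ ∀ u ∈ U, u ⬝ᵥ v = 0 := by
  simp only [perpSub, Submodule.mem_iInf]
  rfl

theorem mem_perpSub_iff_le_perp {U : Submodule K (Fin a → K)} {v : Fin a → K} :
    v ∈ perpSub U ↔ U ≤ perp v := by
  simp only [mem_perpSub, dotProduct_comm _ v]
  rfl

theorem perpSub_top : perpSub (⊤ : Submodule K (Fin a → K)) = ⊥ :=
  (Submodule.eq_bot_iff _).2 fun v hv => dotProduct_eq_zero v fun _ =>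
    mem_perpSub_iff_le_perp.1 hv Submodule.mem_top

theorem perpSub_eq_orthogonal (U : Submodule K (Fin a → K)) :
    perpSub U = LinearMap.BilinForm.orthogonal (dotProductBilin K K) U :=
  Submodule.ext fun _ => mem_perpSub

theorem dotProductBilin_isRefl :
    LinearMap.BilinForm.IsRefl (dotProductBilin K K : LinearMap.BilinForm K (Fin a → K)) :=
  fun u v h => (dotProduct_comm v u).trans h

theorem finrank_add_finrank_perpSub (U : Submodule K (Fin a → K)) :
    finrank K U + finrank K (perpSub U) = a := by
  have h := LinearMap.BilinForm.finrank_add_finrank_orthogonal dotProductBilin_isRefl U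
  rwa [← perpSub_eq_orthogonal, ← perpSub_eq_orthogonal, perpSub_top, inf_bot_eq, finrank_bot,
    finrank_fin_fun, add_zero] at h

theorem perpSub_involutive :
    Function.Involutive (perpSub : Submodule K (Fin a → K) → Submodule K (Fin a → K)) := by
  intro U
  have hle : U ≤ perpSub (perpSub U) := by
    simpa only [perpSub_eq_orthogonal] using
      LinearMap.BilinForm.le_orthogonal_orthogonal dotProductBilin_isRefl
  have hU := finrank_add_finrank_perpSub U
  have hperp := finrank_add_finrank_perpSub (perpSub U)
  exact (Submodule.eq_of_le_of_finrank_eq hle (by lia)).symm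

theorem rowSpace_le_perp_iff {M : Matrix (Fin a) (Fin b) K} {v : Fin b → K} :
    rowSpace M ≤ perp v ↔ M *ᵥ v = 0 := by
  simp only [rowSpace, Submodule.span_le, Set.range_subset_iff, funext_iff, mulVec,
    dotProduct_comm _ v]
  rfl

theorem colSpace_le_perpSub_iff {X : Matrix (Fin a) (Fin b) K} {U : Submodule K (Fin a → K)} :
    colSpace X ≤ perpSub U ↔ ∀ u ∈ U, u ᵥ* X = 0 := by
  simp only [perpSub, le_iInf_iff, ← mulVec_transpose, ← rowSpace_le_perp_iff]
  rfl

theorem mem_perpSub_rowSupport {D : Submodule K (Matrix (Fin a) (Fin b) K)} {v : Fin b → K} :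
    v ∈ perpSub (rowSupport D) ↔ ∀ M ∈ D, M *ᵥ v = 0 := by
  simp only [mem_perpSub_iff_le_perp, rowSupport, iSup_le_iff, rowSpace_le_perp_iff]

end Perp

section GeneralizedWeights

variable {K : Type*} [Field K] {m n : ℕ} {C D : Submodule K (Matrix (Fin m) (Fin n) K)} {t r : ℕ}

theorem dRow_le_finrank_rowSupport (hDC : D ≤ C) (hDt : finrank K D = t) :
    dRow C t ≤ finrank K (rowSupport D) :=
  Nat.sInf_le ⟨D, hDC, hDt, rfl⟩

theorem le_dRow_iff (ht : t ≤ finrank K C) :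
    r ≤ dRow C t ↔ ∀ D ≤ C, finrank K D = t → r ≤ finrank K (rowSupport D) := by
  refine ⟨fun h D hDC hDt => h.trans (dRow_le_finrank_rowSupport hDC hDt), fun h => ?_⟩
  obtain ⟨D₀, hD₀C, hD₀t⟩ := exists_submodule_le_finrank_eq C ht
  refine le_csInf ⟨_, D₀, hD₀C, hD₀t, rfl⟩ ?_
  rintro _ ⟨D, hDC, hDt, rfl⟩
  exact h D hDC hDt

theorem rowSupport_le_of_le_Sr {V : Submodule K (Fin n → K)} (h : D ≤ Sr C V) :
    rowSupport D ≤ V :=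
  iSup₂_le fun _ hM => (h hM).2

theorem finrank_le_finrank_Sr_add (C : Submodule K (Matrix (Fin m) (Fin n) K))
    (V : Submodule K (Fin n → K)) :
    finrank K C ≤ finrank K (Sr C V) + m * (n - finrank K V) := by
  let f : C →ₗ[K] (Fin m → (Fin n → K) ⧸ V) := (V.mkQ.compLeft (Fin m)).comp C.subtype
  have hker : (LinearMap.ker f).map C.subtype ≤ Sr C V := by
    rintro _ ⟨M, hM, rfl⟩
    refine ⟨M.2, Submodule.span_le.2 (Set.range_subset_iff.2 fun i => ?_)⟩
    exact (Submodule.Quotient.mk_eq_zero V).1 (congrFun hM i)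
  have hkerSr : finrank K (LinearMap.ker f) ≤ finrank K (Sr C V) := by
    rw [← finrank_map_of_injective C.injective_subtype]
    exact Submodule.finrank_mono hker
  have hrange : finrank K (LinearMap.range f) ≤ m * (n - finrank K V) := by
    refine (LinearMap.range f).finrank_le.trans_eq ?_
    rw [finrank_pi_fintype, Finset.sum_const, Finset.card_univ, Fintype.card_fin,
      Submodule.finrank_quotient, finrank_fin_fun, smul_eq_mul]
  have hsum := f.finrank_range_add_finrank_ker
  lia

/-- The Singleton bound for generalized rank weights. -/
theorem dRow_le_sub_div (ht : t ≤ finrank K C) : dRow C t ≤ n - (finrank K C - t) / m := by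
  set q := (finrank K C - t) / m
  obtain ⟨V, -, hV⟩ : ∃ V ≤ (⊤ : Submodule K (Fin n → K)), finrank K V = n - q :=
    exists_submodule_le_finrank_eq ⊤ (by rw [finrank_top, finrank_fin_fun]; lia)
  have hSr : t ≤ finrank K (Sr C V) := by
    have hC := finrank_le_finrank_Sr_add C V
    have hcodim : m * (n - finrank K V) ≤ m * q := Nat.mul_le_mul_left m (by lia)
    have hqm : m * q ≤ finrank K C - t := Nat.mul_div_le _ m
    lia
  obtain ⟨D, hD, hDt⟩ := exists_submodule_le_finrank_eq _ hSr
  calc dRow C t ≤ finrank K (rowSupport D) :=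
        dRow_le_finrank_rowSupport (fun _ hM => (hD hM).1) hDt
    _ ≤ finrank K V := Submodule.finrank_mono (rowSupport_le_of_le_Sr hD)
    _ = n - q := hV

end GeneralizedWeights

section ColumnSystem

variable {K : Type*} [Field K] {m n k : ℕ} {B : Fin k → Matrix (Fin m) (Fin n) K}

theorem range_combMap (B : Fin k → Matrix (Fin m) (Fin n) K) :
    LinearMap.range (combMap B) = Submodule.span K (Set.range B) :=
  Fintype.range_linearCombination K B

theorem combMap_injective (hB : LinearIndependent K B) : Function.Injective (combMap B) :=
  hB.fintypeLinearCombination_injective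

theorem vecMul_combMap_colSlices (B : Fin k → Matrix (Fin m) (Fin n) K) (u : Fin k → K)
    (v : Fin n → K) : u ᵥ* combMap (colSlices B) v = combMap B u *ᵥ v := by
  ext j
  simp only [combMap, colSlices, LinearMap.coe_mk, AddHom.coe_mk, vecMul, mulVec, dotProduct,
    Matrix.sum_apply, Matrix.smul_apply, Matrix.of_apply, smul_eq_mul, Finset.mul_sum,
    Finset.sum_mul]
  rw [Finset.sum_comm]
  exact Finset.sum_congr rfl fun l _ => Finset.sum_congr rfl fun i _ => by ring

theorem colSpace_combMap_colSlices_le_perpSub_iff {U : Submodule K (Fin k → K)} {v : Fin n → K} :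
    colSpace (combMap (colSlices B) v) ≤ perpSub U ↔
      v ∈ perpSub (rowSupport (U.map (combMap B))) := by
  simp only [colSpace_le_perpSub_iff, mem_perpSub_rowSupport, vecMul_combMap_colSlices,
    Submodule.mem_map, forall_exists_index, and_imp, forall_apply_eq_imp_iff₂]

theorem Sc_perpSub (B : Fin k → Matrix (Fin m) (Fin n) K) (U : Submodule K (Fin k → K)) :
    Sc (Submodule.span K (Set.range (colSlices B))) (perpSub U) =
      (perpSub (rowSupport (U.map (combMap B)))).map (combMap (colSlices B)) := by
  rw [← range_combMap]
  ext X
  constructor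
  · rintro ⟨⟨v, rfl⟩, hv⟩
    exact ⟨v, colSpace_combMap_colSlices_le_perpSub_iff.1 hv, rfl⟩
  · rintro ⟨v, hv, rfl⟩
    exact ⟨⟨v, rfl⟩, colSpace_combMap_colSlices_le_perpSub_iff.2 hv⟩

theorem combMap_colSlices_injective
    (hnd : rowSupport (Submodule.span K (Set.range B)) = ⊤) :
    Function.Injective (combMap (colSlices B)) := by
  refine (injective_iff_map_eq_zero _).2 fun v hv => ?_
  have hperp : v ∈ perpSub (rowSupport (Submodule.span K (Set.range B))) := by
    rw [← range_combMap, mem_perpSub_rowSupport]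
    rintro _ ⟨u, rfl⟩
    rw [← vecMul_combMap_colSlices, hv, vecMul_zero]
  rwa [hnd, perpSub_top, Submodule.mem_bot] at hperp

theorem finrank_rowSupport_add_finrank_Sc
    (hnd : rowSupport (Submodule.span K (Set.range B)) = ⊤) (W : Submodule K (Fin k → K)) :
    finrank K (rowSupport ((perpSub W).map (combMap B))) +
      finrank K (Sc (Submodule.span K (Set.range (colSlices B))) W) = n := by
  have hSc := Sc_perpSub B (perpSub W)
  rw [perpSub_involutive W] at hSc
  rw [hSc, finrank_map_of_injective (combMap_colSlices_injective hnd)]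
  exact finrank_add_finrank_perpSub _

theorem le_dRow_span_iff (hB : LinearIndependent K B) {t r : ℕ} (htk : t ≤ k) :
    r ≤ dRow (Submodule.span K (Set.range B)) t ↔
      ∀ U : Submodule K (Fin k → K), finrank K U = t →
        r ≤ finrank K (rowSupport (U.map (combMap B))) := by
  rw [le_dRow_iff (htk.trans_eq (finrank_span_range_fin hB).symm), ← range_combMap]
  constructor
  · intro h U hU
    exact h _ LinearMap.map_le_range ((finrank_map_of_injective (combMap_injective hB) U).trans hU)
  · intro h D hD hDt
    obtain ⟨U, rfl⟩ : ∃ U : Submodule K (Fin k → K), U.map (combMap B) = D :=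
      ⟨_, Submodule.map_comap_eq_of_le hD⟩
    exact h U ((finrank_map_of_injective (combMap_injective hB) U).symm.trans hDt)

theorem sub_le_dRow_span_iff (hB : LinearIndependent K B)
    (hnd : rowSupport (Submodule.span K (Set.range B)) = ⊤) {t s : ℕ} (htk : t ≤ k) :
    n - s ≤ dRow (Submodule.span K (Set.range B)) t ↔
      ∀ W : Submodule K (Fin k → K), finrank K W = k - t →
        finrank K (Sc (Submodule.span K (Set.range (colSlices B))) W) ≤ s := by
  rw [le_dRow_span_iff hB htk, perpSub_involutive.surjective.forall]
  refine forall_congr' fun W => ?_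
  have hW := finrank_add_finrank_perpSub W
  have hSc := finrank_rowSupport_add_finrank_Sc hnd W
  exact imp_congr (by lia) (by lia)

end ColumnSystem

theorem stmt8_general {K : Type*} [Field K] {m n k : ℕ} (hm : 0 < m)
    (B : Fin k → Matrix (Fin m) (Fin n) K) (hB : LinearIndependent K B)
    (C : Submodule K (Matrix (Fin m) (Fin n) K))
    (hC : C = Submodule.span K (Set.range B))
    (hnd : rowSupport C = ⊤)
    (S : Submodule K (Matrix (Fin k) (Fin m) K))
    (hS : S = Submodule.span K (Set.range (colSlices B)))
    (t : ℕ) (htk : t ≤ k) :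
    dRow C t = n - (k - t) / m ↔
      ∀ W : Submodule K (Fin k → K), finrank K W = k - t →
        m * finrank K (Sc S W) ≤ k - t := by
  subst hC hS
  have hsingleton : dRow (Submodule.span K (Set.range B)) t ≤ n - (k - t) / m := by
    simpa only [finrank_span_range_fin hB] using
      dRow_le_sub_div (htk.trans_eq (finrank_span_range_fin hB).symm)
  rw [← hsingleton.ge_iff_eq, sub_le_dRow_span_iff hB hnd htk]
  simp only [Nat.le_div_iff_mul_le hm, mul_comm]

/-- For `n ≤ m` and a column-nondegenerate code `C` with associated
column-system `S`: `d_t^r(C) = n − ⌊(k−t)/m⌋` iff `S` is `(k−t)`-column-scattered, i.e.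
every subspace `W ⊆ K^k` with `dim W = k − t` satisfies `m·dim S_c(W) ≤ k − t`. -/
theorem stmt8 {K : Type*} [Field K] {m n k : ℕ}
    (hm : 0 < m) (hn : 0 < n) (hk : 0 < k) (hmn : n ≤ m)
    (B : Fin k → Matrix (Fin m) (Fin n) K) (hB : LinearIndependent K B)
    (C : Submodule K (Matrix (Fin m) (Fin n) K))
    (hC : C = Submodule.span K (Set.range B))
    (hnd : rowSupport C = ⊤)
    (S : Submodule K (Matrix (Fin k) (Fin m) K))
    (hS : S = Submodule.span K (Set.range (colSlices B)))
    (t : ℕ) (ht1 : 1 ≤ t) (htk : t ≤ k) :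
    dRow C t = n - (k - t) / m ↔
      ∀ W : Submodule K (Fin k → K), Module.finrank K W = k - t →
        m * Module.finrank K (Sc S W) ≤ k - t := by
  exact stmt8_general hm B hB C hC hnd S hS t htk
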